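/- Let {E_ℓ} be a Kraus family on the D×D complex matrices whose channel is faithful, and let J be a conserved quantity with phase λ. Suppose there is a positive integer N such that J^{2N} = J^N and J^N ≠ 0. Then e^{−iNλ} = 1. -/

import Mathlib

open Matrix ComplexOrder

lemma aux_eq_zero {D : ℕ} {ρ C : Matrix (Fin D) (Fin D) ℂ} (hρ : ρ.PosDef)
    (h : C * ρ * Cᴴ = 0) : C = 0 := by
  rw [← conjTranspose_eq_zero]
  apply Matrix.ext_of_mulVec_single
  intro i
  rw [zero_mulVec]
  by_contra hne
  have h1 := hρ.dotProduct_mulVec_pos hne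
  have h2 : star (Cᴴ *ᵥ Pi.single i 1) ⬝ᵥ (ρ *ᵥ (Cᴴ *ᵥ Pi.single i 1)) = 0 := by
    rw [star_mulVec, conjTranspose_conjTranspose, ← dotProduct_mulVec, mulVec_mulVec,
      mulVec_mulVec, h, zero_mulVec, dotProduct_zero]
  rw [h2] at h1
  exact lt_irrefl _ h1

lemma aux_comm {D : ℕ} {ι : Type*} [Fintype ι]
    (E : ι → Matrix (Fin D) (Fin D) ℂ)
    (hKraus : ∑ ℓ, (E ℓ)ᴴ * E ℓ = 1)
    (ρ : Matrix (Fin D) (Fin D) ℂ) (hρ : ρ.PosDef) (hfix : ∑ ℓ, E ℓ * ρ * (E ℓ)ᴴ = ρ)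
    (J : Matrix (Fin D) (Fin D) ℂ) (w : ℂ) (hw : star w * w = 1)
    (hJ : ∑ ℓ, (E ℓ)ᴴ * J * E ℓ = w • J) (ℓ : ι) :
    J * E ℓ = w • (E ℓ * J) := by
  have hw' : w * star w = 1 := by rw [mul_comm]; exact hw
  have hJ' : ∑ ℓ, (E ℓ)ᴴ * Jᴴ * E ℓ = star w • Jᴴ := by
    have := congrArg conjTranspose hJ
    simpa [conjTranspose_sum, Matrix.mul_assoc] using this
  set C : ι → Matrix (Fin D) (Fin D) ℂ := fun ℓ => J * E ℓ - w • (E ℓ * J) with hC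
  have hexp : ∀ ℓ, (C ℓ)ᴴ * C ℓ = (E ℓ)ᴴ * (Jᴴ * J) * E ℓ - w • (((E ℓ)ᴴ * Jᴴ * E ℓ) * J)
      - star w • (Jᴴ * ((E ℓ)ᴴ * J * E ℓ)) + Jᴴ * ((E ℓ)ᴴ * E ℓ) * J := by
    intro ℓ
    simp only [hC, conjTranspose_sub, conjTranspose_mul, conjTranspose_smul, Matrix.sub_mul,
      Matrix.mul_sub, Matrix.smul_mul, Matrix.mul_smul, smul_sub, smul_sub, smul_smul, hw, hw', one_smul,
      Matrix.mul_assoc]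
    abel
  have hsum : ∑ ℓ, (C ℓ)ᴴ * C ℓ = ∑ ℓ, (E ℓ)ᴴ * (Jᴴ * J) * E ℓ - Jᴴ * J := by
    simp only [hexp, Finset.sum_add_distrib, Finset.sum_sub_distrib, ← Finset.smul_sum,
      ← Finset.sum_mul, ← Finset.mul_sum, hKraus, hJ, hJ', Matrix.smul_mul, Matrix.mul_smul,
      smul_smul, hw, hw', one_smul, Matrix.mul_one]
    abel
  have htr : ∑ ℓ, (C ℓ * ρ * (C ℓ)ᴴ).trace = 0 := by
    have h1 : ∀ ℓ, (C ℓ * ρ * (C ℓ)ᴴ).trace = (((C ℓ)ᴴ * C ℓ) * ρ).trace := by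
      intro ℓ; rw [trace_mul_comm, Matrix.mul_assoc]
    have h2 : ∀ ℓ, ((E ℓ)ᴴ * (Jᴴ * J) * E ℓ * ρ).trace
        = ((Jᴴ * J) * (E ℓ * ρ * (E ℓ)ᴴ)).trace := by
      intro ℓ
      rw [Matrix.mul_assoc, Matrix.mul_assoc, trace_mul_comm, Matrix.mul_assoc (Jᴴ * J)]
    simp only [h1]
    rw [← trace_sum, ← Finset.sum_mul, hsum, Matrix.sub_mul, trace_sub, Finset.sum_mul, trace_sum]
    simp only [h2]
    rw [← trace_sum, ← Finset.mul_sum, hfix, sub_self]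
  have hps : ∀ ℓ, (C ℓ * ρ * (C ℓ)ᴴ).PosSemidef := fun ℓ =>
    hρ.posSemidef.mul_mul_conjTranspose_same _
  have h0 := (Finset.sum_eq_zero_iff_of_nonneg (fun i _ => (hps i).trace_nonneg)).1 htr ℓ
    (Finset.mem_univ _)
  have := aux_eq_zero hρ ((hps ℓ).trace_eq_zero_iff.1 h0)
  exact sub_eq_zero.1 this

/-- If a conserved quantity `J` with phase `λ` of a faithful Kraus channel
satisfies `J^(2N) = J^N ≠ 0` for some positive integer `N`, then `e^{-iNλ} = 1`. -/
theorem phase_root_of_unity_of_power_projection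
    {D : ℕ} {ι : Type*} [Fintype ι]
    (E : ι → Matrix (Fin D) (Fin D) ℂ)
    (hKraus : ∑ ℓ, (E ℓ)ᴴ * E ℓ = 1)
    (hFaithful : ∃ ρ : Matrix (Fin D) (Fin D) ℂ,
      ρ.PosDef ∧ ∑ ℓ, E ℓ * ρ * (E ℓ)ᴴ = ρ)
    (J : Matrix (Fin D) (Fin D) ℂ) (lam : ℝ)
    (hJ : ∑ ℓ, (E ℓ)ᴴ * J * E ℓ = Complex.exp (-(Complex.I * (lam : ℂ))) • J)
    (N : ℕ) (hN : 0 < N) (hproj : J ^ (2 * N) = J ^ N) (hne : J ^ N ≠ 0) :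
    Complex.exp (-(Complex.I * ((N : ℂ) * (lam : ℂ)))) = 1 := by
  obtain ⟨ρ, hρ, hfix⟩ := hFaithful
  have hpow : Complex.exp (-(Complex.I * ((N : ℂ) * (lam : ℂ))))
      = Complex.exp (-(Complex.I * (lam : ℂ))) ^ N := by
    rw [← Complex.exp_nat_mul]; congr 1; ring
  have hw : star (Complex.exp (-(Complex.I * (lam : ℂ))))
      * Complex.exp (-(Complex.I * (lam : ℂ))) = 1 := by
    rw [Complex.star_def, ← Complex.exp_conj, ← Complex.exp_add]
    simp
  rw [hpow]
  generalize Complex.exp (-(Complex.I * (lam : ℂ))) = w at *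
  have hcomm := aux_comm E hKraus ρ hρ hfix J w hw hJ
  have hw0 : w ≠ 0 := right_ne_zero_of_mul_eq_one hw
  have hk : ∀ k ℓ, J ^ k * E ℓ = w ^ k • (E ℓ * J ^ k) := by
    intro k ℓ
    induction k with
    | zero => simp
    | succ k ih =>
      rw [pow_succ', Matrix.mul_assoc, ih, Matrix.mul_smul, ← Matrix.mul_assoc, hcomm,
        Matrix.smul_mul, smul_smul, Matrix.mul_assoc, pow_succ]
  by_contra hne1
  apply hne
  have hz : ∀ ℓ, E ℓ * J ^ N = 0 := by
    intro ℓ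
    have h1 := hk N ℓ
    have h2 := hk (2 * N) ℓ
    rw [hproj, h1] at h2
    have h3 : (w ^ N - w ^ (2 * N)) • (E ℓ * J ^ N) = 0 := by rw [sub_smul, h2, sub_self]
    rcases smul_eq_zero.1 h3 with h | h
    · exfalso
      have h4 : w ^ N * (1 - w ^ N) = 0 := by rw [← h]; ring
      rcases mul_eq_zero.1 h4 with h5 | h5
      · exact pow_ne_zero N hw0 h5
      · exact hne1 (sub_eq_zero.1 h5).symm
    · exact h
  calc J ^ N = (∑ ℓ, (E ℓ)ᴴ * E ℓ) * J ^ N := by rw [hKraus, Matrix.one_mul]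
    _ = 0 := by
      rw [Finset.sum_mul]
      apply Finset.sum_eq_zero
      intro ℓ _
      rw [Matrix.mul_assoc, hz, Matrix.mul_zero]
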